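/- arXiv:2212.13239 — 2 statements merged into one kernel-verified Lean document; each statement's English description precedes it below -/
import Mathlib

section
/- The weighted total variation metric controls differences of first and second moments: for probability measures μ₁, μ₂ on R^n with finite second moments, |M(μ₁) − M(μ₂)| ≤ ½ d_g(μ₁, μ₂) and ‖C(μ₁) − C(μ₂)‖ ≤ (1 + ½|M(μ₁) + M(μ₂)|) d_g(μ₁, μ₂), where ‖·‖ is the operator (spectral) norm. -/
open MeasureTheory Matrix
open scoped BigOperators ENNReal

noncomputable section

namespace EnKF

/-- Points of `ℝ^n`, with Lebesgue measure as `volume`. -/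
abbrev Vec (n : ℕ) := Fin n → ℝ

/-- Euclidean norm of a finitely indexed real vector. -/
def enorm {ι : Type*} [Fintype ι] (v : ι → ℝ) : ℝ := Real.sqrt (∑ i, v i ^ 2)

/-- The weight function `g(v) = 1 + |v|²` on `ℝ^n`. -/
def gw {n : ℕ} (v : Vec n) : ℝ := 1 + ∑ i, v i ^ 2

/-- The weight function `g(u, y) = 1 + |u|² + |y|²` on `ℝ^d × ℝ^K`. -/
def gw2 {d K : ℕ} (p : Vec d × Vec K) : ℝ := 1 + (∑ i, p.1 i ^ 2) + (∑ j, p.2 j ^ 2)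

/-- Weighted total-variation metric with weight `G`:
`d_G(μ₁, μ₂) = sup { |μ₁[f] − μ₂[f]| : f measurable, |f| ≤ G pointwise }`. -/
def dG {E : Type*} [MeasurableSpace E] (G : E → ℝ) (μ₁ μ₂ : Measure E) : ℝ :=
  ⨆ f : {f : E → ℝ // Measurable f ∧ ∀ v, |f v| ≤ G v},
    |(∫ v, f.1 v ∂μ₁) - ∫ v, f.1 v ∂μ₂|

/-- Loewner order on symmetric matrices: `loe A B ↔ A ≼ B`. -/
def loe {ι : Type*} [Fintype ι] (A B : Matrix ι ι ℝ) : Prop := (B - A).PosSemidef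

/-- Mean vector of a measure on `ℝ^n`. -/
def mean {n : ℕ} (μ : Measure (Vec n)) : Vec n := fun i => ∫ v, v i ∂μ

/-- Covariance matrix of a measure on `ℝ^n`. -/
def cov {n : ℕ} (μ : Measure (Vec n)) : Matrix (Fin n) (Fin n) ℝ :=
  Matrix.of fun i j => ∫ v, (v i - mean μ i) * (v j - mean μ j) ∂μ

/-- Density of the Gaussian `N(m, S)` on `ℝ^n`. -/
def gaussDensity {n : ℕ} (m : Vec n) (S : Matrix (Fin n) (Fin n) ℝ) (x : Vec n) : ℝ :=
  (Real.sqrt ((2 * Real.pi) ^ n * S.det))⁻¹ *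
    Real.exp (-(1 / 2) * ((x - m) ⬝ᵥ (S⁻¹ *ᵥ (x - m))))

/-- The (nondegenerate) Gaussian measure `N(m, S)` on `ℝ^n`. -/
def gauss {n : ℕ} (m : Vec n) (S : Matrix (Fin n) (Fin n) ℝ) : Measure (Vec n) :=
  volume.withDensity fun x => ENNReal.ofReal (gaussDensity m S x)

/-- Gaussian projection `G` on `ℝ^n`: the Gaussian with the same mean and covariance. -/
def Gproj {n : ℕ} (μ : Measure (Vec n)) : Measure (Vec n) := gauss (mean μ) (cov μ)

variable {d K : ℕ}

/-- Mean of the first (state) marginal of a measure on `ℝ^d × ℝ^K`. -/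
def meanU (π : Measure (Vec d × Vec K)) : Vec d := fun i => ∫ p, p.1 i ∂π

/-- Mean of the second (data) marginal of a measure on `ℝ^d × ℝ^K`. -/
def meanY (π : Measure (Vec d × Vec K)) : Vec K := fun j => ∫ p, p.2 j ∂π

/-- Block `C^{uu}` of the covariance of a measure on `ℝ^d × ℝ^K`. -/
def covUU (π : Measure (Vec d × Vec K)) : Matrix (Fin d) (Fin d) ℝ :=
  Matrix.of fun i j => ∫ p, (p.1 i - meanU π i) * (p.1 j - meanU π j) ∂π

/-- Block `C^{uy}` of the covariance of a measure on `ℝ^d × ℝ^K`. -/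
def covUY (π : Measure (Vec d × Vec K)) : Matrix (Fin d) (Fin K) ℝ :=
  Matrix.of fun i j => ∫ p, (p.1 i - meanU π i) * (p.2 j - meanY π j) ∂π

/-- Block `C^{yy}` of the covariance of a measure on `ℝ^d × ℝ^K`. -/
def covYY (π : Measure (Vec d × Vec K)) : Matrix (Fin K) (Fin K) ℝ :=
  Matrix.of fun i j => ∫ p, (p.2 i - meanY π i) * (p.2 j - meanY π j) ∂π

/-- Full covariance matrix of a measure on `ℝ^d × ℝ^K`, in block form. -/
def covBlock (π : Measure (Vec d × Vec K)) : Matrix (Fin d ⊕ Fin K) (Fin d ⊕ Fin K) ℝ :=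
  Matrix.fromBlocks (covUU π) (covUY π) (covUY π)ᵀ (covYY π)

/-- Density of a Gaussian on `ℝ^d × ℝ^K` with mean `(mu, my)` and covariance `S`. -/
def jointGaussDensity (mu : Vec d) (my : Vec K)
    (S : Matrix (Fin d ⊕ Fin K) (Fin d ⊕ Fin K) ℝ) (p : Vec d × Vec K) : ℝ :=
  (Real.sqrt ((2 * Real.pi) ^ (d + K) * S.det))⁻¹ *
    Real.exp (-(1 / 2) *
      (Sum.elim (p.1 - mu) (p.2 - my) ⬝ᵥ (S⁻¹ *ᵥ Sum.elim (p.1 - mu) (p.2 - my))))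

/-- Gaussian measure on `ℝ^d × ℝ^K` with mean `(mu, my)` and covariance `S`. -/
def jointGauss (mu : Vec d) (my : Vec K)
    (S : Matrix (Fin d ⊕ Fin K) (Fin d ⊕ Fin K) ℝ) : Measure (Vec d × Vec K) :=
  volume.withDensity fun p => ENNReal.ofReal (jointGaussDensity mu my S p)

/-- Density of the Gaussian projection of a measure on `ℝ^d × ℝ^K`. -/
def gProjDensity2 (π : Measure (Vec d × Vec K)) : Vec d × Vec K → ℝ :=
  jointGaussDensity (meanU π) (meanY π) (covBlock π)

/-- Gaussian projection on `ℝ^d × ℝ^K`. -/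
def Gproj2 (π : Measure (Vec d × Vec K)) : Measure (Vec d × Vec K) :=
  jointGauss (meanU π) (meanY π) (covBlock π)

/-- Prediction operator `P`: the law of `Ψ(V) + ξ`, `V ∼ μ` independent of `ξ ∼ N(0, Σ)`. -/
def Pop (Psi : Vec d → Vec d) (Sig : Matrix (Fin d) (Fin d) ℝ)
    (μ : Measure (Vec d)) : Measure (Vec d) :=
  (μ.prod (gauss 0 Sig)).map fun p => Psi p.1 + p.2

/-- Lifting operator `Q`: the law of `(U, H(U) + η)`, `U ∼ μ` independent of `η ∼ N(0, Γ)`. -/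
def Qop (H : Vec d → Vec K) (Gam : Matrix (Fin K) (Fin K) ℝ)
    (μ : Measure (Vec d)) : Measure (Vec d × Vec K) :=
  (μ.prod (gauss 0 Gam)).map fun p => (p.1, H p.1 + p.2)

/-- Lebesgue density of `Pμ`. -/
def predDensity (Psi : Vec d → Vec d) (Sig : Matrix (Fin d) (Fin d) ℝ)
    (μ : Measure (Vec d)) (u : Vec d) : ℝ :=
  (Real.sqrt ((2 * Real.pi) ^ d * Sig.det))⁻¹ *
    ∫ v, Real.exp (-(1 / 2) * ((u - Psi v) ⬝ᵥ (Sig⁻¹ *ᵥ (u - Psi v)))) ∂μ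

/-- Lebesgue density of `QPμ` on `ℝ^d × ℝ^K`. -/
def qpDensity (Psi : Vec d → Vec d) (Sig : Matrix (Fin d) (Fin d) ℝ)
    (H : Vec d → Vec K) (Gam : Matrix (Fin K) (Fin K) ℝ)
    (μ : Measure (Vec d)) (p : Vec d × Vec K) : ℝ :=
  predDensity Psi Sig μ p.1 * gaussDensity (H p.1) Gam p.2

/-- Conditioning operator `B` applied to a (joint) density `f` and a datum `y†`:
the measure on `ℝ^d` with density `u ↦ f(u, y†) / ∫ f(U, y†) dU`. -/
def condM (f : Vec d × Vec K → ℝ) (ydag : Vec K) : Measure (Vec d) :=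
  volume.withDensity fun u => ENNReal.ofReal (f (u, ydag) / ∫ U, f (U, ydag))

/-- Kalman transport operator `T`: the pushforward of `π` under
`(u, y) ↦ u + C^{uy}(π) C^{yy}(π)⁻¹ (y† − y)`. -/
def Top (ydag : Vec K) (π : Measure (Vec d × Vec K)) : Measure (Vec d) :=
  π.map fun p => p.1 + covUY π *ᵥ ((covYY π)⁻¹ *ᵥ (ydag - p.2))

/-- Operator (spectral) norm of a real matrix. -/
def opNorm {ι : Type*} [Fintype ι] {κ : Type*} [Fintype κ] (A : Matrix ι κ ℝ) : ℝ :=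
  ⨆ x : {x : κ → ℝ // ∑ i, x i ^ 2 ≤ 1}, enorm (A *ᵥ x.1)

/-- Frobenius norm of a real matrix. -/
def frobNorm {ι κ : Type*} [Fintype ι] [Fintype κ] (A : Matrix ι κ ℝ) : ℝ :=
  Real.sqrt (∑ i, ∑ j, A i j ^ 2)

/-- Weighted norm `|x|_S = |S^{-1/2} x|`, i.e. `√(xᵀ S⁻¹ x)`. -/
def wnorm {n : ℕ} (S : Matrix (Fin n) (Fin n) ℝ) (x : Vec n) : ℝ :=
  Real.sqrt (x ⬝ᵥ (S⁻¹ *ᵥ x))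

/-- The set `𝒫_R(ℝ^n)` of probability measures with `|M(μ)| ≤ R` and
`R⁻² I ≼ C(μ) ≼ R² I`. -/
def PR (n : ℕ) (R : ℝ) : Set (Measure (Vec n)) :=
  {μ | IsProbabilityMeasure μ ∧ enorm (mean μ) ≤ R ∧
    loe ((R ^ 2)⁻¹ • 1) (cov μ) ∧ loe (cov μ) (R ^ 2 • 1)}

/-- The set `𝒫_R(ℝ^d × ℝ^K)`. -/
def PR2 (d K : ℕ) (R : ℝ) : Set (Measure (Vec d × Vec K)) :=
  {π | IsProbabilityMeasure π ∧ enorm (Sum.elim (meanU π) (meanY π)) ≤ R ∧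
    loe ((R ^ 2)⁻¹ • 1) (covBlock π) ∧ loe (covBlock π) (R ^ 2 • 1)}

/-- Smallest eigenvalue of a symmetric matrix (Rayleigh quotient form). -/
def lambdaMin {ι : Type*} [Fintype ι] (A : Matrix ι ι ℝ) : ℝ :=
  ⨅ x : {x : ι → ℝ // ∑ i, x i ^ 2 = 1}, x.1 ⬝ᵥ (A *ᵥ x.1)

/-- Kullback–Leibler divergence `KL(μ₁ ‖ μ₂) = ∫ (dμ₁/dμ₂) log (dμ₁/dμ₂) dμ₂`. -/
def kl {E : Type*} [MeasurableSpace E] (μ₁ μ₂ : Measure E) : ℝ :=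
  ∫ v, ((μ₁.rnDeriv μ₂ v).toReal * Real.log (μ₁.rnDeriv μ₂ v).toReal) ∂μ₂

/-!
By duality it suffices to bound `b ⬝ᵥ (M(μ₁) - M(μ₂))` and `b ⬝ᵥ (C(μ₁) - C(μ₂)) *ᵥ a` for `a`, `b`
in the unit ball. Both test functions `2 (b ⬝ᵥ v)` and `(b ⬝ᵥ v) (a ⬝ᵥ v)` are dominated by
`1 + |v|²`, so the metric controls differences of their integrals. The former gives the bound on
means. For covariances, the products of means are polarized: with `Δ = M(μ₁) - M(μ₂)` and
`S = M(μ₁) + M(μ₂)`,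
`C(μ₁) - C(μ₂) = (μ₁[v vᵀ] - μ₂[v vᵀ]) - ½ (Δ Sᵀ + S Δᵀ)`,
and `|Δ|` has already been bounded.
-/

section EuclideanNorm

variable {ι κ : Type*} [Fintype ι] [Fintype κ]

theorem enorm_nonneg (x : ι → ℝ) : 0 ≤ enorm x := Real.sqrt_nonneg _

theorem enorm_sq (x : ι → ℝ) : enorm x ^ 2 = x ⬝ᵥ x := by
  simp only [enorm, dotProduct, ← sq]
  exact Real.sq_sqrt (Finset.sum_nonneg fun _ _ => sq_nonneg _)

theorem abs_dotProduct_le_enorm_mul_enorm (x y : ι → ℝ) : |x ⬝ᵥ y| ≤ enorm x * enorm y := by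
  rw [enorm, enorm, ← Real.sqrt_mul (Finset.sum_nonneg fun _ _ => sq_nonneg _)]
  exact Real.abs_le_sqrt (Finset.sum_mul_sq_le_sq_mul_sq _ _ _)

theorem abs_dotProduct_le_enorm {b : ι → ℝ} (hb : enorm b ≤ 1) (x : ι → ℝ) :
    |b ⬝ᵥ x| ≤ enorm x :=
  (abs_dotProduct_le_enorm_mul_enorm b x).trans (mul_le_of_le_one_left (enorm_nonneg x) hb)

theorem enorm_smul (c : ℝ) (x : ι → ℝ) : enorm (c • x) = |c| * enorm x := by
  simp only [enorm, Pi.smul_apply, smul_eq_mul, mul_pow, ← Finset.mul_sum]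
  rw [Real.sqrt_mul (sq_nonneg c), Real.sqrt_sq_eq_abs]

theorem exists_enorm_le_one_dotProduct_eq_enorm (w : ι → ℝ) :
    ∃ b : ι → ℝ, enorm b ≤ 1 ∧ b ⬝ᵥ w = enorm w := by
  -- For `w = 0` this witness is `0`, since `0⁻¹ = 0`.
  refine ⟨(enorm w)⁻¹ • w, ?_, ?_⟩
  · rw [enorm_smul, abs_inv, abs_of_nonneg (enorm_nonneg w)]
    exact inv_mul_le_one
  · rw [smul_dotProduct, ← enorm_sq, smul_eq_mul, sq, ← mul_assoc, inv_mul_mul_self]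

theorem enorm_le_of_forall_dotProduct_le {w : ι → ℝ} {c : ℝ}
    (h : ∀ b : ι → ℝ, enorm b ≤ 1 → b ⬝ᵥ w ≤ c) : enorm w ≤ c := by
  obtain ⟨b, hb, hbw⟩ := exists_enorm_le_one_dotProduct_eq_enorm w
  exact hbw ▸ h b hb

theorem opNorm_le_of_forall_dotProduct_mulVec_le {A : Matrix ι κ ℝ} {c : ℝ}
    (h : ∀ (b : ι → ℝ) (a : κ → ℝ), enorm b ≤ 1 → enorm a ≤ 1 → b ⬝ᵥ A *ᵥ a ≤ c) :
    opNorm A ≤ c := by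
  have : Nonempty {x : κ → ℝ // ∑ i, x i ^ 2 ≤ 1} := ⟨⟨0, by simp⟩⟩
  refine ciSup_le fun ⟨a, ha⟩ => enorm_le_of_forall_dotProduct_le fun b hb => ?_
  exact h b a hb (Real.sqrt_le_one.mpr ha)

end EuclideanNorm

section Weight

variable {n : ℕ} {a b : Vec n}

theorem gw_eq_one_add_enorm_sq (v : Vec n) : gw v = 1 + enorm v ^ 2 := by
  rw [gw, enorm_sq]
  simp only [dotProduct, sq]

theorem abs_two_mul_dotProduct_le_gw (hb : enorm b ≤ 1) (v : Vec n) :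
    |2 * (b ⬝ᵥ v)| ≤ gw v := by
  calc |2 * (b ⬝ᵥ v)| = 2 * |b ⬝ᵥ v| := by rw [abs_mul, abs_two]
    _ ≤ 2 * 1 * enorm v := by linarith [abs_dotProduct_le_enorm hb v]
    _ ≤ 1 ^ 2 + enorm v ^ 2 := two_mul_le_add_sq 1 (enorm v)
    _ = gw v := by rw [gw_eq_one_add_enorm_sq, one_pow]

theorem abs_dotProduct_mul_dotProduct_le_gw (ha : enorm a ≤ 1) (hb : enorm b ≤ 1) (v : Vec n) :
    |(a ⬝ᵥ v) * (b ⬝ᵥ v)| ≤ gw v := by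
  calc |(a ⬝ᵥ v) * (b ⬝ᵥ v)| = |a ⬝ᵥ v| * |b ⬝ᵥ v| := abs_mul _ _
    _ ≤ enorm v * enorm v :=
      mul_le_mul (abs_dotProduct_le_enorm ha v) (abs_dotProduct_le_enorm hb v)
        (abs_nonneg _) (enorm_nonneg v)
    _ ≤ gw v := by rw [gw_eq_one_add_enorm_sq]; linarith

end Weight

theorem abs_integral_sub_integral_le_dG {E : Type*} [MeasurableSpace E] {G : E → ℝ}
    {μ₁ μ₂ : Measure E} (h₁ : Integrable G μ₁) (h₂ : Integrable G μ₂) {f : E → ℝ}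
    (hf : Measurable f) (hfG : ∀ v, |f v| ≤ G v) :
    |(∫ v, f v ∂μ₁) - ∫ v, f v ∂μ₂| ≤ dG G μ₁ μ₂ := by
  have hbdd : BddAbove (Set.range fun f : {f : E → ℝ // Measurable f ∧ ∀ v, |f v| ≤ G v} =>
      |(∫ v, f.1 v ∂μ₁) - ∫ v, f.1 v ∂μ₂|) := by
    refine ⟨(∫ v, G v ∂μ₁) + ∫ v, G v ∂μ₂, ?_⟩
    rintro _ ⟨⟨f, -, hfG⟩, rfl⟩
    exact (abs_sub _ _).trans (add_le_add
      (norm_integral_le_of_norm_le (f := f) h₁ (.of_forall hfG))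
      (norm_integral_le_of_norm_le (f := f) h₂ (.of_forall hfG)))
  exact le_ciSup hbdd ⟨f, hf, hfG⟩

theorem covariance_sub_covariance {Ω : Type*} [MeasurableSpace Ω] {μ₁ μ₂ : Measure Ω}
    [IsProbabilityMeasure μ₁] [IsProbabilityMeasure μ₂] {X Y : Ω → ℝ}
    (hX₁ : MemLp X 2 μ₁) (hY₁ : MemLp Y 2 μ₁) (hX₂ : MemLp X 2 μ₂) (hY₂ : MemLp Y 2 μ₂) :
    ProbabilityTheory.covariance X Y μ₁ - ProbabilityTheory.covariance X Y μ₂ =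
      ((∫ ω, X ω * Y ω ∂μ₁) - ∫ ω, X ω * Y ω ∂μ₂) -
        (((∫ ω, X ω ∂μ₁) - ∫ ω, X ω ∂μ₂) * ((∫ ω, Y ω ∂μ₁) + ∫ ω, Y ω ∂μ₂) +
          ((∫ ω, X ω ∂μ₁) + ∫ ω, X ω ∂μ₂) * ((∫ ω, Y ω ∂μ₁) - ∫ ω, Y ω ∂μ₂)) / 2 := by
  rw [ProbabilityTheory.covariance_eq_sub hX₁ hY₁, ProbabilityTheory.covariance_eq_sub hX₂ hY₂]
  simp only [Pi.mul_apply]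
  ring

section LinearForms

variable {ι : Type*} [Fintype ι]

theorem measurable_const_dotProduct (b : ι → ℝ) : Measurable fun v : ι → ℝ => b ⬝ᵥ v :=
  (continuous_const.dotProduct continuous_id).measurable

theorem memLp_two_eval_of_integrable_sum_sq {μ : Measure (ι → ℝ)}
    (h : Integrable (fun v : ι → ℝ => ∑ i, v i ^ 2) μ) (i : ι) :
    MemLp (fun v : ι → ℝ => v i) 2 μ := by
  have hmeas : Measurable fun v : ι → ℝ => v i := measurable_pi_apply i
  refine (memLp_two_iff_integrable_sq hmeas.aestronglyMeasurable).mpr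
    (h.mono' (hmeas.pow_const 2).aestronglyMeasurable (.of_forall fun v => ?_))
  rw [Real.norm_of_nonneg (sq_nonneg _)]
  exact Finset.single_le_sum (fun k _ => sq_nonneg (v k)) (Finset.mem_univ i)

theorem memLp_const_dotProduct {p : ℝ≥0∞} {μ : Measure (ι → ℝ)}
    (h : ∀ i, MemLp (fun v : ι → ℝ => v i) p μ) (b : ι → ℝ) :
    MemLp (fun v : ι → ℝ => b ⬝ᵥ v) p μ :=
  memLp_finsetSum _ fun i _ => (h i).const_mul (b i)

end LinearForms

section Moments

variable {n : ℕ} {μ μ₁ μ₂ : Measure (Vec n)}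

theorem integrable_gw [IsFiniteMeasure μ] (h : Integrable (fun v : Vec n => ∑ i, v i ^ 2) μ) :
    Integrable gw μ :=
  (integrable_const 1).add h

theorem integral_dotProduct_eq_dotProduct_mean (h : ∀ i, Integrable (fun v : Vec n => v i) μ)
    (b : Vec n) : ∫ v, b ⬝ᵥ v ∂μ = b ⬝ᵥ mean μ := by
  simp only [dotProduct, mean]
  rw [integral_finsetSum _ fun i _ => (h i).const_mul _]
  simp only [integral_const_mul]

theorem dotProduct_cov_mulVec_eq_covariance [IsFiniteMeasure μ]
    (h : ∀ i, MemLp (fun v : Vec n => v i) 2 μ) (a b : Vec n) :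
    b ⬝ᵥ cov μ *ᵥ a = ProbabilityTheory.covariance (fun v => b ⬝ᵥ v) (fun v => a ⬝ᵥ v) μ := by
  have hcov (i j : Fin n) :
      cov μ i j = ProbabilityTheory.covariance (fun v => v i) (fun v => v j) μ := rfl
  simp only [dotProduct, mulVec, hcov]
  rw [ProbabilityTheory.covariance_fun_sum_fun_sum (fun i => (h i).const_mul (b i))
    fun j => (h j).const_mul (a j)]
  simp only [ProbabilityTheory.covariance_const_mul_left,
    ProbabilityTheory.covariance_const_mul_right]
  simp only [Finset.mul_sum, mul_comm (a _), mul_assoc]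

theorem dotProduct_cov_sub_cov_mulVec [IsProbabilityMeasure μ₁] [IsProbabilityMeasure μ₂]
    (h₁ : ∀ i, MemLp (fun v : Vec n => v i) 2 μ₁) (h₂ : ∀ i, MemLp (fun v : Vec n => v i) 2 μ₂)
    (a b : Vec n) :
    b ⬝ᵥ (cov μ₁ - cov μ₂) *ᵥ a =
      ((∫ v, (b ⬝ᵥ v) * (a ⬝ᵥ v) ∂μ₁) - ∫ v, (b ⬝ᵥ v) * (a ⬝ᵥ v) ∂μ₂) -
        ((b ⬝ᵥ (mean μ₁ - mean μ₂)) * (a ⬝ᵥ (mean μ₁ + mean μ₂)) +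
          (b ⬝ᵥ (mean μ₁ + mean μ₂)) * (a ⬝ᵥ (mean μ₁ - mean μ₂))) / 2 := by
  have hmean₁ := integral_dotProduct_eq_dotProduct_mean fun i => (h₁ i).integrable one_le_two
  have hmean₂ := integral_dotProduct_eq_dotProduct_mean fun i => (h₂ i).integrable one_le_two
  rw [sub_mulVec, dotProduct_sub, dotProduct_cov_mulVec_eq_covariance h₁,
    dotProduct_cov_mulVec_eq_covariance h₂,
    covariance_sub_covariance (memLp_const_dotProduct h₁ b) (memLp_const_dotProduct h₁ a)
      (memLp_const_dotProduct h₂ b) (memLp_const_dotProduct h₂ a)]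
  simp only [hmean₁, hmean₂, dotProduct_sub, dotProduct_add]

theorem enorm_mean_sub_mean_le [IsFiniteMeasure μ₁] [IsFiniteMeasure μ₂]
    (h₁ : Integrable (fun v : Vec n => ∑ i, v i ^ 2) μ₁)
    (h₂ : Integrable (fun v : Vec n => ∑ i, v i ^ 2) μ₂) :
    enorm (mean μ₁ - mean μ₂) ≤ 1 / 2 * dG gw μ₁ μ₂ := by
  refine enorm_le_of_forall_dotProduct_le fun b hb => ?_
  have htest := abs_integral_sub_integral_le_dG (integrable_gw h₁) (integrable_gw h₂)
    ((measurable_const_dotProduct b).const_mul 2) (abs_two_mul_dotProduct_le_gw hb)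
  have hmean₁ := integral_dotProduct_eq_dotProduct_mean (fun i =>
    (memLp_two_eval_of_integrable_sum_sq h₁ i).integrable one_le_two) b
  have hmean₂ := integral_dotProduct_eq_dotProduct_mean (fun i =>
    (memLp_two_eval_of_integrable_sum_sq h₂ i).integrable one_le_two) b
  rw [integral_const_mul, integral_const_mul, hmean₁, hmean₂] at htest
  rw [dotProduct_sub]
  linarith [le_of_abs_le htest]

theorem opNorm_cov_sub_cov_le [IsProbabilityMeasure μ₁] [IsProbabilityMeasure μ₂]
    (h₁ : Integrable (fun v : Vec n => ∑ i, v i ^ 2) μ₁)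
    (h₂ : Integrable (fun v : Vec n => ∑ i, v i ^ 2) μ₂) :
    opNorm (cov μ₁ - cov μ₂) ≤ (1 + 1 / 2 * enorm (mean μ₁ + mean μ₂)) * dG gw μ₁ μ₂ := by
  have hmean := enorm_mean_sub_mean_le h₁ h₂
  have hcross {x y : Vec n} (hx : enorm x ≤ 1) (hy : enorm y ≤ 1) :
      |(x ⬝ᵥ (mean μ₁ - mean μ₂)) * (y ⬝ᵥ (mean μ₁ + mean μ₂))| ≤
        1 / 2 * dG gw μ₁ μ₂ * enorm (mean μ₁ + mean μ₂) := by
    rw [abs_mul]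
    exact mul_le_mul ((abs_dotProduct_le_enorm hx _).trans hmean) (abs_dotProduct_le_enorm hy _)
      (abs_nonneg _) ((enorm_nonneg _).trans hmean)
  refine opNorm_le_of_forall_dotProduct_mulVec_le fun b a hb ha => ?_
  have htest := abs_integral_sub_integral_le_dG (integrable_gw h₁) (integrable_gw h₂)
    (f := fun v => (b ⬝ᵥ v) * (a ⬝ᵥ v))
    ((measurable_const_dotProduct b).mul (measurable_const_dotProduct a))
    (abs_dotProduct_mul_dotProduct_le_gw hb ha)
  rw [dotProduct_cov_sub_cov_mulVec (memLp_two_eval_of_integrable_sum_sq h₁)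
    (memLp_two_eval_of_integrable_sum_sq h₂)]
  linarith [le_of_abs_le htest, neg_le_of_abs_le (hcross hb ha), neg_le_of_abs_le (hcross ha hb)]

end Moments

/-- **The weighted TV metric controls first and second moments** (Lemma A.3). -/
theorem moment_bound_dG
    (n : ℕ) (μ₁ μ₂ : Measure (Vec n))
    (hμ₁ : IsProbabilityMeasure μ₁) (hμ₂ : IsProbabilityMeasure μ₂)
    (h₁ : Integrable (fun v : Vec n => ∑ i, v i ^ 2) μ₁)
    (h₂ : Integrable (fun v : Vec n => ∑ i, v i ^ 2) μ₂) :
    enorm (mean μ₁ - mean μ₂) ≤ (1 / 2) * dG gw μ₁ μ₂ ∧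
    opNorm (cov μ₁ - cov μ₂) ≤ (1 + (1 / 2) * enorm (mean μ₁ + mean μ₂)) * dG gw μ₁ μ₂ :=
  ⟨enorm_mean_sub_mean_le h₁ h₂, opNorm_cov_sub_cov_le h₁ h₂⟩

end EnKF
end
end

section
/- Equivalence of the two formulations of the Gaussian projected filter: fix a datum y† ∈ R^K and let μ be a probability measure on R^d. Then B G Q P μ = G T Q P μ, where B and T use the datum y†. In particular the iteration μ^G_{j+1} = B_j G Q P μ^G_j is equivalent to μ^G_{j+1} = G T_j Q P μ^G_j. -/
open MeasureTheory Matrix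
open scoped BigOperators ENNReal

noncomputable section

namespace EnKF

variable {d K : ℕ}

/-!
Both sides are Gaussian, so it is enough to match means and covariances. Conditioning a
nondegenerate Gaussian on `y = y†` completes the square through the Schur complement of `C^{yy}`,
which gives mean `m_u + C^{uy} (C^{yy})⁻¹ (y† - m_y)` and covariance
`C^{uu} - C^{uy} (C^{yy})⁻¹ C^{yu}`. Up to a constant, the transport map is the residual of the
linear regression of `u` on `y`; the residual is uncorrelated with `y`, so its covariance is the
same Schur complement. The joint covariance of `QPμ` is nondegenerate because `QPμ` has a Lebesgue
density (shears preserve Lebesgue measure), hence is not carried by a hyperplane.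
-/

section SchurComplement

variable {m n R : Type*} [Fintype m] [Fintype n] [DecidableEq m] [DecidableEq n] [CommRing R]

theorem mulVec_dotProduct_inv_mulVec_of_isUnit_det {L : Matrix n n R} (hL : IsUnit L.det)
    (M : Matrix n n R) (z : n → R) :
    (L *ᵥ z) ⬝ᵥ ((L * M * Lᵀ)⁻¹ *ᵥ (L *ᵥ z)) = z ⬝ᵥ (M⁻¹ *ᵥ z) := by
  have hcancel : L⁻¹ *ᵥ (L *ᵥ z) = z := by
    rw [mulVec_mulVec, nonsing_inv_mul _ hL, one_mulVec]
  rw [Matrix.mul_inv_rev, Matrix.mul_inv_rev, ← mulVec_mulVec, ← mulVec_mulVec, hcancel,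
    dotProduct_mulVec, ← transpose_nonsing_inv, vecMul_transpose, hcancel]

variable {A : Matrix m m R} {B : Matrix m n R} {D : Matrix n n R}

theorem det_fromBlocks_eq_det_mul_det_schur (hD : IsUnit D.det) :
    (fromBlocks A B Bᵀ D).det = D.det * (A - B * D⁻¹ * Bᵀ).det := by
  have := ((isUnit_iff_isUnit_det D).mpr hD).invertible
  rw [det_fromBlocks₂₂, invOf_eq_nonsing_inv]

theorem fromBlocks_eq_mul_schur_mul_transpose (hD : IsUnit D.det) (hsymm : D.IsSymm) :
    fromBlocks A B Bᵀ D =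
      fromBlocks 1 (B * D⁻¹) 0 1 * fromBlocks (A - B * D⁻¹ * Bᵀ) 0 0 D *
        (fromBlocks 1 (B * D⁻¹) 0 1)ᵀ := by
  have := ((isUnit_iff_isUnit_det D).mpr hD).invertible
  rw [fromBlocks_eq_of_invertible₂₂, fromBlocks_transpose, transpose_mul, transpose_nonsing_inv,
    hsymm.eq, invOf_eq_nonsing_inv]
  simp only [transpose_one, transpose_zero]

theorem dotProduct_inv_fromBlocks_mulVec (hD : IsUnit D.det) (hsymm : D.IsSymm)
    (hS : IsUnit (A - B * D⁻¹ * Bᵀ).det) (z : m → R) (w : n → R) :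
    Sum.elim z w ⬝ᵥ ((fromBlocks A B Bᵀ D)⁻¹ *ᵥ Sum.elim z w) =
      (z - B *ᵥ (D⁻¹ *ᵥ w)) ⬝ᵥ ((A - B * D⁻¹ * Bᵀ)⁻¹ *ᵥ (z - B *ᵥ (D⁻¹ *ᵥ w))) +
        w ⬝ᵥ (D⁻¹ *ᵥ w) := by
  have hshear : Sum.elim z w =
      fromBlocks 1 (B * D⁻¹) 0 1 *ᵥ Sum.elim (z - B *ᵥ (D⁻¹ *ᵥ w)) w := by
    simp [fromBlocks_mulVec]
  have hblocks : IsUnit (A - B * D⁻¹ * Bᵀ) ↔ IsUnit D := by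
    simp only [isUnit_iff_isUnit_det, hS, hD]
  rw [fromBlocks_eq_mul_schur_mul_transpose hD hsymm, hshear,
    mulVec_dotProduct_inv_mulVec_of_isUnit_det (by simp),
    inv_fromBlocks_zero₂₁_of_isUnit_iff _ _ _ hblocks, fromBlocks_mulVec,
    sumElim_dotProduct_sumElim]
  simp

end SchurComplement

section PosDef

theorem posDef_toBlocks₂₂_of_posDef_fromBlocks {m n : Type*} {A : Matrix m m ℝ} {B : Matrix m n ℝ}
    {D : Matrix n n ℝ} (h : (fromBlocks A B Bᵀ D).PosDef) : D.PosDef :=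
  h.submatrix Sum.inr_injective

variable {n : Type*} [Fintype n] [DecidableEq n]

theorem posDef_schur_of_posDef_fromBlocks {m : Type*} [Finite m] {A : Matrix m m ℝ}
    {B : Matrix m n ℝ} {D : Matrix n n ℝ} (h : (fromBlocks A B Bᵀ D).PosDef) :
    (A - B * D⁻¹ * Bᵀ).PosDef := by
  classical
  have := Fintype.ofFinite m
  have hD := posDef_toBlocks₂₂_of_posDef_fromBlocks h
  have hsymm := isHermitian_iff_isSymm.mp hD.isHermitian
  have hunit : IsUnit (fromBlocks (1 : Matrix m m ℝ) (B * D⁻¹) 0 (1 : Matrix n n ℝ)) := by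
    simp [isUnit_iff_isUnit_det]
  rw [fromBlocks_eq_mul_schur_mul_transpose hD.det_pos.ne'.isUnit hsymm,
    ← conjTranspose_eq_transpose_of_trivial (fromBlocks 1 _ 0 1), ← star_eq_conjTranspose,
    hunit.posDef_star_right_conjugate_iff] at h
  exact h.submatrix Sum.inl_injective

open scoped MatrixOrder Matrix.Norms.L2Operator in
theorem exists_isUnit_eq_mul_transpose_of_posDef {S : Matrix n n ℝ} (hS : S.PosDef) :
    ∃ B : Matrix n n ℝ, IsUnit B ∧ S = B * Bᵀ :=
  CStarAlgebra.isStrictlyPositive_iff_eq_mul_star_self.mp hS.isStrictlyPositive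

theorem posDef_of_loe {c : ℝ} (hc : 0 < c) {S : Matrix n n ℝ} (h : loe (c • 1) S) : S.PosDef := by
  have hsum := (PosDef.one.smul hc).add_posSemidef h
  rwa [add_sub_cancel] at hsum

end PosDef

section CrossCovariance

open ProbabilityTheory

variable {Ω Ω' ι κ ι' : Type*} [MeasurableSpace Ω] [MeasurableSpace Ω'] {P : Measure Ω}
  {X Z : Ω → ι → ℝ} {Y : Ω → κ → ℝ}

/-- Cross-covariance matrix of two random vectors. The blocks `covUU`, `covUY`, `covYY` of a
measure on a product are the cross-covariances of its two projections. -/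
def crossCov (X : Ω → ι → ℝ) (Y : Ω → κ → ℝ) (P : Measure Ω) : Matrix ι κ ℝ :=
  Matrix.of fun i j => covariance (fun ω => X ω i) (fun ω => Y ω j) P

theorem transpose_crossCov (X : Ω → ι → ℝ) (Y : Ω → κ → ℝ) (P : Measure Ω) :
    (crossCov X Y P)ᵀ = crossCov Y X P := by
  ext i j
  exact covariance_comm _ _

theorem crossCov_map {X : Ω' → ι → ℝ} {Y : Ω' → κ → ℝ} {f : Ω → Ω'}
    (hf : AEMeasurable f P) (hX : AEStronglyMeasurable X (P.map f))
    (hY : AEStronglyMeasurable Y (P.map f)) :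
    crossCov X Y (P.map f) = crossCov (X ∘ f) (Y ∘ f) P := by
  ext i j
  exact covariance_map_fun ((continuous_apply i).comp_aestronglyMeasurable hX)
    ((continuous_apply j).comp_aestronglyMeasurable hY) hf

variable [Fintype ι]

theorem integrable_mulVec [Fintype ι'] (M : Matrix ι' ι ℝ) (hX : Integrable X P) :
    Integrable (fun ω => M *ᵥ X ω) P :=
  M.mulVecLin.toContinuousLinearMap.integrable_comp hX

theorem integral_mulVec [Fintype ι'] (M : Matrix ι' ι ℝ) (hX : Integrable X P) :
    ∫ ω, M *ᵥ X ω ∂P = M *ᵥ ∫ ω, X ω ∂P :=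
  M.mulVecLin.toContinuousLinearMap.integral_comp_comm hX

theorem memLp_mulVec [Fintype ι'] (M : Matrix ι' ι ℝ) (hX : MemLp X 2 P) :
    MemLp (fun ω => M *ᵥ X ω) 2 P :=
  M.mulVecLin.toContinuousLinearMap.comp_memLp' hX

theorem crossCov_add_const_left [IsProbabilityMeasure P] (hX : Integrable X P) (c : ι → ℝ)
    (Y : Ω → κ → ℝ) : crossCov (fun ω => X ω + c) Y P = crossCov X Y P := by
  ext i j
  exact covariance_add_const_left (hX.eval i) (c i)

theorem crossCov_add_const_self [IsProbabilityMeasure P] (hX : Integrable X P) (c : ι → ℝ) :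
    crossCov (fun ω => X ω + c) (fun ω => X ω + c) P = crossCov X X P := by
  rw [crossCov_add_const_left hX, ← transpose_crossCov, crossCov_add_const_left hX,
    transpose_crossCov]

variable [Fintype κ] [IsFiniteMeasure P]

theorem crossCov_sub_left (hX : MemLp X 2 P) (hZ : MemLp Z 2 P) (hY : MemLp Y 2 P) :
    crossCov (fun ω => X ω - Z ω) Y P = crossCov X Y P - crossCov Z Y P := by
  ext i j
  exact covariance_fun_sub_left (hX.eval i) (hZ.eval i) (hY.eval j)

theorem crossCov_mulVec_left (M : Matrix ι' ι ℝ) (hX : MemLp X 2 P)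
    (hY : MemLp Y 2 P) :
    crossCov (fun ω => M *ᵥ X ω) Y P = M * crossCov X Y P := by
  ext i j
  simp only [crossCov, mulVec, dotProduct, of_apply, mul_apply]
  rw [covariance_fun_sum_left (fun k => (hX.eval k).const_mul (M i k)) (hY.eval j)]
  simp only [covariance_const_mul_left]

theorem crossCov_sub_mulVec_left [Fintype ι'] {W : Ω → ι' → ℝ} (M : Matrix ι κ ℝ)
    (hX : MemLp X 2 P) (hY : MemLp Y 2 P) (hW : MemLp W 2 P) :
    crossCov (fun ω => X ω - M *ᵥ Y ω) W P = crossCov X W P - M * crossCov Y W P := by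
  rw [crossCov_sub_left hX (memLp_mulVec M hY) hW, crossCov_mulVec_left M hY hW]

theorem crossCov_sub_mulVec_right [Fintype ι'] {W : Ω → ι' → ℝ} (M : Matrix ι κ ℝ)
    (hX : MemLp X 2 P) (hY : MemLp Y 2 P) (hW : MemLp W 2 P) :
    crossCov W (fun ω => X ω - M *ᵥ Y ω) P = crossCov W X P - crossCov W Y P * Mᵀ := by
  rw [← transpose_crossCov, crossCov_sub_mulVec_left M hX hY hW, transpose_sub, transpose_mul,
    transpose_crossCov, transpose_crossCov]

theorem crossCov_regression_residual [DecidableEq κ] (hX : MemLp X 2 P) (hY : MemLp Y 2 P)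
    (h : IsUnit (crossCov Y Y P).det) :
    crossCov (fun ω => X ω - (crossCov X Y P * (crossCov Y Y P)⁻¹) *ᵥ Y ω)
        (fun ω => X ω - (crossCov X Y P * (crossCov Y Y P)⁻¹) *ᵥ Y ω) P =
      crossCov X X P - crossCov X Y P * (crossCov Y Y P)⁻¹ * (crossCov X Y P)ᵀ := by
  set M := crossCov X Y P * (crossCov Y Y P)⁻¹ with hM
  set R : Ω → ι → ℝ := fun ω => X ω - M *ᵥ Y ω with hR
  have hR₂ : MemLp R 2 P := hX.sub (memLp_mulVec M hY)
  have hRY : crossCov R Y P = 0 := by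
    rw [hR, crossCov_sub_mulVec_left M hX hY hY, hM, nonsing_inv_mul_cancel_right _ _ h, sub_self]
  calc crossCov R R P = crossCov R X P - crossCov R Y P * Mᵀ :=
        crossCov_sub_mulVec_right M hX hY hR₂
    _ = crossCov R X P := by rw [hRY, Matrix.zero_mul, sub_zero]
    _ = crossCov X X P - M * (crossCov X Y P)ᵀ := by
        rw [hR, crossCov_sub_mulVec_left M hX hY hX, transpose_crossCov]

theorem dotProduct_crossCov_self_mulVec (hX : MemLp X 2 P) (a : ι → ℝ) :
    a ⬝ᵥ (crossCov X X P *ᵥ a) = variance (fun ω => a ⬝ᵥ X ω) P := by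
  simp only [dotProduct, mulVec, crossCov, of_apply, Finset.mul_sum]
  rw [variance_fun_sum fun i => (hX.eval i).const_mul (a i)]
  simp only [covariance_const_mul_left, covariance_const_mul_right]
  exact Finset.sum_congr rfl fun i _ => Finset.sum_congr rfl fun j _ => by ring

theorem posDef_crossCov_self (hX : MemLp X 2 P)
    (hnd : ∀ a ≠ 0, ∀ c : ℝ, ¬ ∀ᵐ ω ∂P, a ⬝ᵥ X ω = c) : (crossCov X X P).PosDef := by
  refine .of_dotProduct_mulVec_pos (isHermitian_iff_isSymm.mpr (transpose_crossCov X X P))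
    fun a ha => ?_
  rw [star_trivial, dotProduct_crossCov_self_mulVec hX]
  have haX : MemLp (fun ω => a ⬝ᵥ X ω) 2 P :=
    memLp_finsetSum Finset.univ fun i _ => (hX.eval i).const_mul (a i)
  exact (variance_nonneg _ _).lt_of_ne' fun hzero =>
    hnd a ha _ (ae_eq_integral_of_variance_eq_zero haX hzero)

end CrossCovariance

section Gaussian

open ProbabilityTheory

variable {n : ℕ}

theorem gaussDensity_nonneg (m : Vec n) (S : Matrix (Fin n) (Fin n) ℝ) (x : Vec n) :
    0 ≤ gaussDensity m S x := by
  unfold gaussDensity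
  positivity

theorem gaussDensity_pos (m : Vec n) {S : Matrix (Fin n) (Fin n) ℝ} (hS : 0 < S.det) (x : Vec n) :
    0 < gaussDensity m S x := by
  unfold gaussDensity
  positivity

@[fun_prop]
theorem continuous_gaussDensity (m : Vec n) (S : Matrix (Fin n) (Fin n) ℝ) :
    Continuous (gaussDensity m S) := by
  unfold gaussDensity
  fun_prop

theorem absolutelyContinuous_gauss (m : Vec n) (S : Matrix (Fin n) (Fin n) ℝ) :
    gauss m S ≪ volume :=
  withDensity_absolutelyContinuous _ _

theorem gaussDensity_zero_one (x : Vec n) :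
    gaussDensity 0 1 x = ∏ i, gaussianPDFReal 0 1 (x i) := by
  have hsqrt : Real.sqrt ((2 * Real.pi) ^ n) = Real.sqrt (2 * Real.pi) ^ n := by
    rw [← Real.sqrt_sq (by positivity : 0 ≤ Real.sqrt (2 * Real.pi) ^ n), ← pow_mul, mul_comm n,
      pow_mul, Real.sq_sqrt (by positivity)]
  simp only [gaussDensity, gaussianPDFReal, Finset.prod_mul_distrib, ← Real.exp_sum, det_one,
    mul_one, inv_one, one_mulVec, sub_zero, NNReal.coe_one, Finset.prod_const, Finset.card_univ,
    Fintype.card_fin, inv_pow, hsqrt, dotProduct, Finset.mul_sum]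
  congr! 3
  ring

theorem gauss_zero_one : gauss (0 : Vec n) 1 = Measure.pi fun _ => gaussianReal 0 1 := by
  refine (Measure.pi_eq fun s hs => ?_).symm
  rw [gauss, withDensity_apply _ (MeasurableSet.univ_pi hs), volume_pi, Measure.restrict_pi_pi,
    ← ofReal_integral_eq_lintegral_ofReal]
  · simp only [gaussDensity_zero_one]
    rw [integral_fintype_prod_eq_prod,
      ENNReal.ofReal_prod_of_nonneg fun i _ => integral_nonneg (gaussianPDFReal_nonneg _ _)]
    simp only [gaussianReal_apply_eq_integral _ one_ne_zero]
  · rw [funext gaussDensity_zero_one]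
    exact .fintype_prod fun i => (integrable_gaussianPDFReal 0 1).restrict
  · exact ae_of_all _ (gaussDensity_nonneg 0 1)

theorem isGaussian_pi_gaussianReal {ι : Type*} [Fintype ι] :
    IsGaussian (Measure.pi fun _ : ι => gaussianReal 0 1) := by
  rw [← isGaussian_map_equiv_iff (EuclideanSpace.equiv ι ℝ).symm]
  exact map_pi_eq_stdGaussian (ι := ι) ▸ isGaussian_stdGaussian

theorem volume_eq_smul_map_add_mulVec (m : Vec n) {B : Matrix (Fin n) (Fin n) ℝ}
    (hB : B.det ≠ 0) :
    (volume : Measure (Vec n)) =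
      ENNReal.ofReal |B.det| • Measure.map (fun x => m + B *ᵥ x) volume := by
  have hmap : Measure.map (fun x => m + B *ᵥ x) volume =
      ENNReal.ofReal |B.det⁻¹| • (volume : Measure (Vec n)) := by
    have hlin := Real.map_matrix_volume_pi_eq_smul_volume_pi hB
    rw [← map_add_left_eq_self volume m, ← Measure.map_smul, ← hlin, map_add_left_eq_self,
      Measure.map_map (by fun_prop) (by fun_prop)]
    rfl
  rw [hmap, smul_smul, ← ENNReal.ofReal_mul (abs_nonneg _), ← abs_mul, mul_inv_cancel₀ hB]
  simp

theorem gaussDensity_add_mulVec (m : Vec n) {B : Matrix (Fin n) (Fin n) ℝ} (hB : B.det ≠ 0)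
    (x : Vec n) :
    |B.det| * gaussDensity m (B * Bᵀ) (m + B *ᵥ x) = gaussDensity 0 1 x := by
  have hquad : (B *ᵥ x) ⬝ᵥ ((B * Bᵀ)⁻¹ *ᵥ (B *ᵥ x)) = x ⬝ᵥ x := by
    simpa using mulVec_dotProduct_inv_mulVec_of_isUnit_det hB.isUnit 1 x
  have hdet : Real.sqrt ((2 * Real.pi) ^ n * (B * Bᵀ).det) =
      Real.sqrt ((2 * Real.pi) ^ n) * |B.det| := by
    rw [det_mul, det_transpose, Real.sqrt_mul (by positivity), Real.sqrt_mul_self_eq_abs]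
  have hpos : |B.det| ≠ 0 := abs_ne_zero.mpr hB
  simp only [gaussDensity, add_sub_cancel_left, hquad, hdet, sub_zero, inv_one, one_mulVec,
    det_one, mul_one]
  field_simp

theorem gauss_mul_transpose (m : Vec n) {B : Matrix (Fin n) (Fin n) ℝ} (hB : B.det ≠ 0) :
    gauss m (B * Bᵀ) = (gauss 0 1).map fun x => m + B *ᵥ x := by
  have hT : Measurable fun x : Vec n => m + B *ᵥ x := by fun_prop
  have hf : Measurable fun x => ENNReal.ofReal (gaussDensity m (B * Bᵀ) x) := by fun_prop
  ext s hs
  rw [Measure.map_apply hT hs, gauss, gauss, withDensity_apply _ hs, withDensity_apply _ (hT hs)]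
  calc ∫⁻ x in s, ENNReal.ofReal (gaussDensity m (B * Bᵀ) x)
      = ENNReal.ofReal |B.det| * ∫⁻ x in (fun x => m + B *ᵥ x) ⁻¹' s,
          ENNReal.ofReal (gaussDensity m (B * Bᵀ) (m + B *ᵥ x)) := by
        conv_lhs => rw [volume_eq_smul_map_add_mulVec m hB]
        rw [Measure.restrict_smul, lintegral_smul_measure, setLIntegral_map hs hf hT, smul_eq_mul]
    _ = ∫⁻ x in (fun x => m + B *ᵥ x) ⁻¹' s, ENNReal.ofReal (gaussDensity 0 1 x) := by
        simp only [← gaussDensity_add_mulVec m hB, ENNReal.ofReal_mul (abs_nonneg B.det)]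
        exact (lintegral_const_mul _ (hf.comp hT)).symm

theorem isGaussian_gauss (m : Vec n) {S : Matrix (Fin n) (Fin n) ℝ} (hS : S.PosDef) :
    IsGaussian (gauss m S) := by
  obtain ⟨B, hB, rfl⟩ := exists_isUnit_eq_mul_transpose_of_posDef hS
  rw [gauss_mul_transpose m ((isUnit_iff_isUnit_det B).mp hB).ne_zero, gauss_zero_one]
  have := isGaussian_pi_gaussianReal (ι := Fin n)
  have hlin := isGaussian_map (μ := Measure.pi fun _ : Fin n => gaussianReal 0 1)
    B.mulVecLin.toContinuousLinearMap
  have hcomp : (Measure.pi fun _ => gaussianReal 0 1).map (fun x => m + B *ᵥ x) =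
      ((Measure.pi fun _ => gaussianReal 0 1).map B.mulVecLin.toContinuousLinearMap).map
        fun x => m + x :=
    (Measure.map_map (by fun_prop) (by fun_prop)).symm
  rw [hcomp]
  infer_instance

theorem isProbabilityMeasure_gauss (m : Vec n) {S : Matrix (Fin n) (Fin n) ℝ} (hS : S.PosDef) :
    IsProbabilityMeasure (gauss m S) :=
  (isGaussian_gauss m hS).toIsProbabilityMeasure

theorem memLp_gauss (m : Vec n) {S : Matrix (Fin n) (Fin n) ℝ} (hS : S.PosDef) :
    MemLp id 2 (gauss m S) :=
  have := isGaussian_gauss m hS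
  IsGaussian.memLp_two_id

theorem integral_gaussDensity (m : Vec n) {S : Matrix (Fin n) (Fin n) ℝ} (hS : S.PosDef) :
    ∫ x, gaussDensity m S x = 1 := by
  have hmass := (isProbabilityMeasure_gauss m hS).measure_univ
  rw [gauss, withDensity_apply _ MeasurableSet.univ, Measure.restrict_univ] at hmass
  rw [integral_eq_lintegral_of_nonneg_ae (ae_of_all _ (gaussDensity_nonneg m S)) (by fun_prop),
    hmass, ENNReal.toReal_one]

end Gaussian

section Nondegenerate

theorem ae_linearMap_ne {E : Type*} [NormedAddCommGroup E] [NormedSpace ℝ E]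
    [FiniteDimensional ℝ E] [MeasurableSpace E] [BorelSpace E] (ν : Measure E) [ν.IsAddHaarMeasure]
    {L : E →ₗ[ℝ] ℝ} (hL : L ≠ 0) (c : ℝ) : ∀ᵐ x ∂ν, L x ≠ c :=
  (ae_comp_linearMap_mem_iff L ν volume (LinearMap.surjective hL)
    (measurableSet_singleton c).compl).mpr (Measure.ae_ne volume c)

theorem posDef_crossCov_of_absolutelyContinuous {E ι : Type*} [NormedAddCommGroup E]
    [NormedSpace ℝ E] [FiniteDimensional ℝ E] [MeasurableSpace E] [BorelSpace E] [Fintype ι]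
    {ν P : Measure E} [ν.IsAddHaarMeasure] [IsProbabilityMeasure P] (hP : P ≪ ν)
    {L : E →ₗ[ℝ] ι → ℝ} (hL : Function.Surjective L) (hL₂ : MemLp L 2 P) :
    (crossCov L L P).PosDef := by
  refine posDef_crossCov_self hL₂ fun a ha c hconst => ?_
  have hcomp : dotProductBilin ℝ ℝ a ∘ₗ L ≠ 0 := fun hzero => ha <| by
    obtain ⟨x, hx⟩ := hL a
    have hax := LinearMap.congr_fun hzero x
    rwa [LinearMap.comp_apply, hx, LinearMap.zero_apply, dotProductBilin_apply_apply,
      dotProduct_self_eq_zero] at hax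
  obtain ⟨x, hx, hne⟩ := (hconst.and (hP.ae_le (ae_linearMap_ne ν hcomp c))).exists
  exact hne hx

variable {π : Measure (Vec d × Vec K)}

theorem covBlock_eq_crossCov (π : Measure (Vec d × Vec K)) :
    covBlock π = crossCov (fun p => Sum.elim p.1 p.2) (fun p => Sum.elim p.1 p.2) π := by
  have hYU : (covUY π)ᵀ = crossCov Prod.snd Prod.fst π := transpose_crossCov Prod.fst Prod.snd π
  rw [covBlock, hYU]
  ext (i | i) (j | j) <;> rfl

theorem posDef_covBlock [IsProbabilityMeasure π] (hac : π ≪ volume) (hπ : MemLp id 2 π) :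
    (covBlock π).PosDef := by
  obtain ⟨hu, hy⟩ := memLp_prod_iff.mp hπ
  have : (volume : Measure (Vec d × Vec K)).IsAddHaarMeasure :=
    Measure.prod.instIsAddHaarMeasure volume volume
  have hpair : MemLp (fun p : Vec d × Vec K => Sum.elim p.1 p.2) 2 π :=
    .of_eval (Sum.rec hu.eval hy.eval)
  let e := (LinearEquiv.sumArrowLequivProdArrow (Fin d) (Fin K) ℝ ℝ).symm
  rw [covBlock_eq_crossCov]
  exact posDef_crossCov_of_absolutelyContinuous hac (L := e.toLinearMap) e.surjective hpair

end Nondegenerate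

section Transport

theorem mean_map {Ω : Type*} [MeasurableSpace Ω] {P : Measure Ω} {n : ℕ} {X : Ω → Vec n}
    (hX : Integrable X P) : mean (P.map X) = ∫ ω, X ω ∂P := by
  funext i
  rw [eval_integral hX.eval]
  exact integral_map hX.aemeasurable (continuous_apply i).aestronglyMeasurable

variable {π : Measure (Vec d × Vec K)}

theorem Top_eq_map_residual (ydag : Vec K) (π : Measure (Vec d × Vec K)) :
    Top ydag π = π.map fun p =>
      p.1 - (covUY π * (covYY π)⁻¹) *ᵥ p.2 + (covUY π * (covYY π)⁻¹) *ᵥ ydag := by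
  simp only [Top, mulVec_mulVec, mulVec_sub, sub_add_eq_add_sub, add_sub_assoc]

variable [IsProbabilityMeasure π]

theorem mean_Top (hπ : Integrable id π) (ydag : Vec K) :
    mean (Top ydag π) = meanU π + covUY π *ᵥ ((covYY π)⁻¹ *ᵥ (ydag - meanY π)) := by
  have hu : Integrable (fun p : Vec d × Vec K => p.1) π := hπ.fst
  have hy : Integrable (fun p : Vec d × Vec K => p.2) π := hπ.snd
  have hmeanU : meanU π = ∫ p, p.1 ∂π := funext fun i => (eval_integral hu.eval i).symm
  have hmeanY : meanY π = ∫ p, p.2 ∂π := funext fun j => (eval_integral hy.eval j).symm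
  set G := covUY π * (covYY π)⁻¹
  have hGy : Integrable (fun p => G *ᵥ p.2) π := integrable_mulVec G hy
  have hresidual : Integrable (fun p => p.1 - G *ᵥ p.2) π := hu.sub hGy
  calc mean (Top ydag π)
      = ∫ p, (p.1 - G *ᵥ p.2 + G *ᵥ ydag) ∂π := by
        rw [Top_eq_map_residual]
        exact mean_map (hresidual.add (integrable_const _))
    _ = meanU π - G *ᵥ meanY π + G *ᵥ ydag := by
        rw [integral_add hresidual (integrable_const _), integral_sub hu hGy,
          integral_mulVec G hy, integral_const, probReal_univ, one_smul, ← hmeanU, ← hmeanY]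
    _ = meanU π + covUY π *ᵥ ((covYY π)⁻¹ *ᵥ (ydag - meanY π)) := by
        rw [mulVec_mulVec, mulVec_sub]
        abel

theorem cov_Top (hπ : MemLp id 2 π) (hD : IsUnit (covYY π).det) (ydag : Vec K) :
    cov (Top ydag π) = covUU π - covUY π * (covYY π)⁻¹ * (covUY π)ᵀ := by
  obtain ⟨hu, hy⟩ := memLp_prod_iff.mp hπ
  set G := covUY π * (covYY π)⁻¹
  have hresidual : Integrable (fun p : Vec d × Vec K => p.1 - G *ᵥ p.2) π :=
    (hu.sub (memLp_mulVec G hy)).integrable one_le_two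
  calc cov (Top ydag π)
      = crossCov (fun p => p.1 - G *ᵥ p.2 + G *ᵥ ydag) (fun p => p.1 - G *ᵥ p.2 + G *ᵥ ydag) π := by
        rw [Top_eq_map_residual]
        exact crossCov_map (X := id) (Y := id) (by fun_prop) (by fun_prop) (by fun_prop)
    _ = crossCov (fun p => p.1 - G *ᵥ p.2) (fun p => p.1 - G *ᵥ p.2) π :=
        crossCov_add_const_self hresidual _
    _ = covUU π - G * (covUY π)ᵀ := crossCov_regression_residual hu hy hD

end Transport

section Conditioning

variable {A : Matrix (Fin d) (Fin d) ℝ} {B : Matrix (Fin d) (Fin K) ℝ}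
  {D : Matrix (Fin K) (Fin K) ℝ}

theorem jointGaussDensity_fromBlocks (hD : D.PosDef) (hS : IsUnit (A - B * D⁻¹ * Bᵀ).det)
    (mu u : Vec d) (my y : Vec K) :
    jointGaussDensity mu my (fromBlocks A B Bᵀ D) (u, y) =
      gaussDensity my D y *
        gaussDensity (mu + B *ᵥ (D⁻¹ *ᵥ (y - my))) (A - B * D⁻¹ * Bᵀ) u := by
  have hDu := hD.det_pos.ne'.isUnit
  have hdet := hD.det_pos
  have hsqrt : Real.sqrt ((2 * Real.pi) ^ (d + K) * (fromBlocks A B Bᵀ D).det) =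
      Real.sqrt ((2 * Real.pi) ^ K * D.det) *
        Real.sqrt ((2 * Real.pi) ^ d * (A - B * D⁻¹ * Bᵀ).det) := by
    rw [← Real.sqrt_mul (by positivity), det_fromBlocks_eq_det_mul_det_schur hDu]
    ring_nf
  simp only [jointGaussDensity, gaussDensity, hsqrt, mul_inv, mul_add, Real.exp_add, ← sub_sub,
    dotProduct_inv_fromBlocks_mulVec hDu (isHermitian_iff_isSymm.mp hD.isHermitian) hS]
  ring

theorem condM_jointGaussDensity (h : (fromBlocks A B Bᵀ D).PosDef) (mu : Vec d) (my y : Vec K) :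
    condM (jointGaussDensity mu my (fromBlocks A B Bᵀ D)) y =
      gauss (mu + B *ᵥ (D⁻¹ *ᵥ (y - my))) (A - B * D⁻¹ * Bᵀ) := by
  have hD := posDef_toBlocks₂₂_of_posDef_fromBlocks h
  have hS := posDef_schur_of_posDef_fromBlocks h
  simp only [condM, gauss, jointGaussDensity_fromBlocks hD hS.det_pos.ne'.isUnit,
    integral_const_mul, integral_gaussDensity _ hS, mul_one,
    mul_div_cancel_left₀ _ (gaussDensity_pos my hD.det_pos y).ne']

theorem condM_gProjDensity2_eq_Gproj_Top {π : Measure (Vec d × Vec K)} [IsProbabilityMeasure π]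
    (hπ : MemLp id 2 π) (hC : (covBlock π).PosDef) (ydag : Vec K) :
    condM (gProjDensity2 π) ydag = Gproj (Top ydag π) := by
  have hD : (covYY π).PosDef := posDef_toBlocks₂₂_of_posDef_fromBlocks hC
  rw [Gproj, mean_Top (hπ.integrable one_le_two), cov_Top hπ hD.det_pos.ne'.isUnit]
  exact condM_jointGaussDensity hC _ _ _

end Conditioning

section Operators

theorem measurePreserving_shear {E : Type*} [MeasurableSpace E] {n : ℕ} (ν : Measure E) [SFinite ν]
    {F : E → Vec n} (hF : Measurable F) :
    MeasurePreserving (fun p : E × Vec n => (p.1, F p.1 + p.2))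
      (ν.prod volume) (ν.prod volume) :=
  (MeasurePreserving.id ν).skew_product (g := fun u y => F u + y) (by fun_prop)
    (ae_of_all _ fun u => map_add_left_eq_self volume (F u))

theorem memLp_add_noise {E : Type*} [MeasurableSpace E] {n : ℕ} {ν : Measure E}
    [IsFiniteMeasure ν] {F : E → Vec n} (hF : MemLp F 2 ν) {S : Matrix (Fin n) (Fin n) ℝ}
    (hS : S.PosDef) : MemLp (fun p : E × Vec n => F p.1 + p.2) 2 (ν.prod (gauss 0 S)) := by
  have := isProbabilityMeasure_gauss 0 hS
  exact (hF.comp_fst _).add ((memLp_gauss 0 hS).comp_snd ν)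

variable {Psi : Vec d → Vec d} {H : Vec d → Vec K}
  {Sig : Matrix (Fin d) (Fin d) ℝ} {Gam : Matrix (Fin K) (Fin K) ℝ} {ν : Measure (Vec d)}

theorem isProbabilityMeasure_Pop [IsProbabilityMeasure ν] (hPsi : Measurable Psi)
    (hSig : Sig.PosDef) : IsProbabilityMeasure (Pop Psi Sig ν) := by
  have := isProbabilityMeasure_gauss 0 hSig
  exact Measure.isProbabilityMeasure_map (by fun_prop)

theorem isProbabilityMeasure_Qop [IsProbabilityMeasure ν] (hH : Measurable H)
    (hGam : Gam.PosDef) : IsProbabilityMeasure (Qop H Gam ν) := by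
  have := isProbabilityMeasure_gauss 0 hGam
  exact Measure.isProbabilityMeasure_map (by fun_prop)

theorem absolutelyContinuous_Pop [SFinite ν] (hPsi : Measurable Psi)
    (Sig : Matrix (Fin d) (Fin d) ℝ) : Pop Psi Sig ν ≪ volume :=
  ((Measure.AbsolutelyContinuous.rfl.prod (absolutelyContinuous_gauss 0 Sig)).map
    (by fun_prop)).trans
    (Measure.quasiMeasurePreserving_snd.comp
      (measurePreserving_shear ν hPsi).quasiMeasurePreserving).absolutelyContinuous

theorem absolutelyContinuous_Qop (hν : ν ≪ volume) (hH : Measurable H)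
    (Gam : Matrix (Fin K) (Fin K) ℝ) : Qop H Gam ν ≪ volume :=
  ((hν.prod (absolutelyContinuous_gauss 0 Gam)).map (by fun_prop)).trans
    (measurePreserving_shear volume hH).quasiMeasurePreserving.absolutelyContinuous

theorem memLp_Pop [IsFiniteMeasure ν] (hPsi : Measurable Psi) (hPsi₂ : MemLp Psi 2 ν)
    (hSig : Sig.PosDef) : MemLp id 2 (Pop Psi Sig ν) := by
  rw [Pop, memLp_map_measure_iff (by fun_prop) (by fun_prop)]
  exact memLp_add_noise hPsi₂ hSig

theorem memLp_Qop [IsFiniteMeasure ν] (hν : MemLp id 2 ν) (hH : Measurable H)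
    (hH₂ : MemLp H 2 ν) (hGam : Gam.PosDef) : MemLp id 2 (Qop H Gam ν) := by
  have := isProbabilityMeasure_gauss 0 hGam
  rw [Qop, memLp_map_measure_iff (by fun_prop) (by fun_prop)]
  exact memLp_prod_iff.mpr ⟨hν.comp_fst _, memLp_add_noise hH₂ hGam⟩

theorem memLp_of_enorm_le {E ι : Type*} [MeasurableSpace E] [Fintype ι] {P : Measure E}
    [IsFiniteMeasure P] {F : E → ι → ℝ} (hF : AEStronglyMeasurable F P) {c : ℝ}
    (hb : ∀ v, enorm (F v) ≤ c) (p : ℝ≥0∞) : MemLp F p P := by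
  have hnorm (v : E) : ‖F v‖ ≤ enorm (F v) :=
    (pi_norm_le_iff_of_nonneg (Real.sqrt_nonneg _)).mpr fun i => Real.abs_le_sqrt <|
      Finset.single_le_sum (f := fun j => F v j ^ 2) (fun j _ => sq_nonneg _) (Finset.mem_univ i)
  exact .of_bound hF c (ae_of_all _ fun v => (hnorm v).trans (hb v))

end Operators

theorem gaussian_projected_filter_two_forms_general
    {Psi : Vec d → Vec d} {H : Vec d → Vec K} (hPsi : Measurable Psi) (hH : Measurable H)
    {Sig : Matrix (Fin d) (Fin d) ℝ} {Gam : Matrix (Fin K) (Fin K) ℝ}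
    (hSig : Sig.PosDef) (hGam : Gam.PosDef) {μ : Measure (Vec d)} [IsProbabilityMeasure μ]
    (hPsi₂ : MemLp Psi 2 μ) (hH₂ : MemLp H 2 (Pop Psi Sig μ)) (ydag : Vec K) :
    condM (gProjDensity2 (Qop H Gam (Pop Psi Sig μ))) ydag =
      Gproj (Top ydag (Qop H Gam (Pop Psi Sig μ))) := by
  have := isProbabilityMeasure_Pop (ν := μ) hPsi hSig
  have := isProbabilityMeasure_Qop (ν := Pop Psi Sig μ) hH hGam
  have hmoments : MemLp id 2 (Qop H Gam (Pop Psi Sig μ)) :=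
    memLp_Qop (memLp_Pop hPsi hPsi₂ hSig) hH hH₂ hGam
  have hac : Qop H Gam (Pop Psi Sig μ) ≪ volume :=
    absolutelyContinuous_Qop (absolutelyContinuous_Pop hPsi Sig) hH Gam
  exact condM_gProjDensity2_eq_Gproj_Top hmoments (posDef_covBlock hac hmoments) ydag

/-- **Equivalence of the two formulations of the Gaussian projected filter** (Lemma A.5):
`B G Q P μ = G T Q P μ`. -/
theorem gaussian_projected_filter_two_forms
    (d K : ℕ) (κΨ κH σ γ : ℝ) (hσ : 0 < σ) (hγ : 0 < γ)
    (Psi : Vec d → Vec d) (H : Vec d → Vec K)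
    (hPsim : Measurable Psi) (hHm : Measurable H)
    (hPsib : ∀ v, enorm (Psi v) ≤ κΨ) (hHb : ∀ v, enorm (H v) ≤ κH)
    (Sig : Matrix (Fin d) (Fin d) ℝ) (Gam : Matrix (Fin K) (Fin K) ℝ)
    (hSig : loe (σ • 1) Sig) (hGam : loe (γ • 1) Gam)
    (ydag : Vec K) (μ : Measure (Vec d)) (hμ : IsProbabilityMeasure μ) :
    condM (gProjDensity2 (Qop H Gam (Pop Psi Sig μ))) ydag =
      Gproj (Top ydag (Qop H Gam (Pop Psi Sig μ))) := by
  have hP := isProbabilityMeasure_Pop (ν := μ) hPsim (posDef_of_loe hσ hSig)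
  exact gaussian_projected_filter_two_forms_general hPsim hHm (posDef_of_loe hσ hSig)
    (posDef_of_loe hγ hGam) (memLp_of_enorm_le hPsim.aestronglyMeasurable hPsib 2)
    (memLp_of_enorm_le hHm.aestronglyMeasurable hHb 2) ydag

end EnKF
end
end
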